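/- arXiv:1312.5195 — 2 statements merged into one kernel-verified Lean document; each statement's English description precedes it below -/
import Mathlib

section
/- Let A be a C*-algebra, a, b ∈ A₊ positive elements, and ε > 0 with ‖a − b‖ < ε. Then there exists a contraction d ∈ A such that d* a d = (b − ε)₊, where (b − ε)₊ denotes the positive part of b − ε·1 in the unitization of A. -/
section aux

variable {B : Type*} [CStarAlgebra B] [PartialOrder B] [StarOrderedRing B]

lemma aux_sandwich (x : B) (hx : IsSelfAdjoint x) (f : ℝ → ℝ) (hf : Continuous f) :
    cfc f x * x * cfc f x = cfc (fun t => f t * t * f t) x := by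
  conv_lhs => rw [← cfc_id ℝ x hx]
  rw [cfc_id ℝ x hx]
  have h1 : cfc f x * x = cfc (fun t => f t * t) x := by
    conv_lhs => enter [2]; rw [← cfc_id' ℝ x hx]
    rw [cfc_mul f (fun t => t) x hf.continuousOn continuousOn_id]
  rw [h1, cfc_mul (fun t => f t * t) f x (by fun_prop) hf.continuousOn]

lemma aux_spec (x : B) (hx : 0 ≤ x) {t : ℝ} (ht : t ∈ spectrum ℝ x) : 0 ≤ t :=
  spectrum_nonneg_of_nonneg hx ht

/-- if `p = p*`, `T = T*`, `p p ≤ h`, then `‖T p‖² ≤ ‖T h T‖`. -/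
lemma aux_norm (T p h : B) (hp : IsSelfAdjoint p) (hph : p * p ≤ h) :
    ‖T * p‖ ^ 2 ≤ ‖T * h * star T‖ := by
  have h1 : ‖T * p‖ ^ 2 = ‖T * (p * p) * star T‖ := by
    rw [sq, ← CStarRing.norm_self_mul_star, star_mul, hp.star_eq]
    simp only [mul_assoc]
  rw [h1]
  apply CStarAlgebra.norm_le_norm_of_nonneg_of_le
  · apply star_right_conjugate_nonneg
    have := star_mul_self_nonneg p
    rwa [hp.star_eq] at this
  · exact star_right_conjugate_le_conjugate hph T

noncomputable def auxT (r t : ℝ) : ℝ := (√(max t 0 + r ^ 2))⁻¹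

lemma auxT_cont {r : ℝ} (hr : 0 < r) : Continuous (auxT r) := by
  unfold auxT
  refine Continuous.inv₀ (by fun_prop) (fun t => ?_)
  have : 0 ≤ max t 0 := le_max_right _ _
  positivity

lemma auxT_est {r : ℝ} (hr : 0 < r) {t : ℝ} (ht : 0 ≤ t) :
    |t * auxT r t - √t| ≤ r := by
  unfold auxT
  rw [max_eq_left ht]
  have h0 : 0 < √(t + r ^ 2) := by positivity
  have h1 : √t ≤ √(t + r ^ 2) := Real.sqrt_le_sqrt (by nlinarith)
  have h2 : √(t + r ^ 2) ≤ √t + r := by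
    rw [Real.sqrt_le_left (by positivity)]
    nlinarith [Real.sq_sqrt ht, Real.sqrt_nonneg t]
  have h3 : t * (√(t + r ^ 2))⁻¹ - √t
      = - ((√t / √(t + r ^ 2)) * (√(t + r ^ 2) - √t)) := by
    field_simp
    nlinarith [Real.sq_sqrt ht]
  rw [h3, abs_neg, abs_of_nonneg (mul_nonneg (by positivity) (by linarith))]
  have h4 : √t / √(t + r ^ 2) ≤ 1 := (div_le_one h0).2 h1
  have h5 : 0 ≤ √t / √(t + r ^ 2) := by positivity
  nlinarith

lemma auxT_sq {r : ℝ} (hr : 0 < r) {t : ℝ} (ht : 0 ≤ t) :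
    auxT r t * t * auxT r t = 1 - r ^ 2 * (auxT r t * auxT r t) := by
  unfold auxT
  rw [max_eq_left ht]
  have h0 : 0 < √(t + r ^ 2) := by positivity
  have := Real.sq_sqrt (show 0 ≤ t + r ^ 2 by positivity)
  field_simp
  nlinarith

lemma aux_i (p h : B) (hp : IsSelfAdjoint p) (hh : 0 ≤ h) (hph : p * p ≤ h)
    {r : ℝ} (hr : 0 < r) : ‖cfc (auxT r) h * p‖ ≤ 1 := by
  have h1 := aux_norm (cfc (auxT r) h) p h hp hph
  rw [(cfc_predicate (auxT r) h : IsSelfAdjoint _).star_eq,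
    aux_sandwich h (.of_nonneg hh) _ (auxT_cont hr)] at h1
  have h2 : ‖cfc (fun t => auxT r t * t * auxT r t) h‖ ≤ 1 := by
    refine norm_cfc_le zero_le_one fun t ht => ?_
    have ht := aux_spec h hh ht
    have h3 : 0 ≤ auxT r t * t * auxT r t := by
      have : 0 ≤ auxT r t := by unfold auxT; positivity
      positivity
    rw [Real.norm_of_nonneg h3, auxT_sq hr ht]
    nlinarith [mul_self_nonneg (r * auxT r t)]
  have := h1.trans h2
  nlinarith [norm_nonneg (cfc (auxT r) h * p)]

lemma aux_ii (p h : B) (hp : IsSelfAdjoint p) (hh : 0 ≤ h) (hph : p * p ≤ h)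
    {r : ℝ} (hr : 0 < r) :
    ‖p * cfc (auxT r) h * h * cfc (auxT r) h * p - p * p‖ ≤ r ^ 2 := by
  have h1 := aux_sandwich h (.of_nonneg hh) _ (auxT_cont hr)
  have h2 : cfc (fun t => auxT r t * t * auxT r t) h
      = 1 - r ^ 2 • (cfc (auxT r) h * cfc (auxT r) h) := by
    have hc := auxT_cont hr
    rw [← cfc_mul (auxT r) (auxT r) h hc.continuousOn hc.continuousOn,
      ← cfc_smul (r ^ 2) (fun t => auxT r t * auxT r t) h (by fun_prop),
      ← cfc_one ℝ h (.of_nonneg hh), ← cfc_sub _ _ h (by fun_prop) (by fun_prop)]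
    refine cfc_congr fun t ht => ?_
    simpa using auxT_sq hr (aux_spec h hh ht)
  have hT : IsSelfAdjoint (cfc (auxT r) h) := cfc_predicate (auxT r) h
  have hi := aux_i p h hp hh hph hr
  generalize cfc (auxT r) h = T at *
  rw [h2] at h1
  have h3 : p * T * h * T * p - p * p = - (r ^ 2 • (star (T * p) * (T * p))) := by
    have : p * T * h * T * p = p * (T * h * T) * p := by simp only [mul_assoc]
    rw [this, h1, star_mul, hp.star_eq, hT.star_eq]
    simp only [mul_sub, sub_mul, mul_one, mul_smul_comm, smul_mul_assoc, mul_assoc]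
    abel
  rw [h3, norm_neg, norm_smul, CStarRing.norm_star_mul_self, Real.norm_of_nonneg (by positivity)]
  have : ‖T * p‖ * ‖T * p‖ ≤ 1 := by nlinarith [norm_nonneg (T * p)]
  nlinarith [sq_nonneg r]

lemma aux_iii (p h : B) (hp : IsSelfAdjoint p) (hh : 0 ≤ h) (hph : p * p ≤ h)
    {r s : ℝ} (hr : 0 < r) (hs : 0 < s) :
    ‖p * (cfc (auxT r) h - cfc (auxT s) h) * h * (cfc (auxT r) h - cfc (auxT s) h) * p‖
      ≤ (r + s) ^ 2 := by
  have hcr := auxT_cont hr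
  have hcs := auxT_cont hs
  have hhs : IsSelfAdjoint h := .of_nonneg hh
  rw [← cfc_sub _ _ h hcr.continuousOn hcs.continuousOn]
  set F : ℝ → ℝ := fun t => auxT r t - auxT s t with hF
  have hFc : Continuous F := by fun_prop
  have hD : IsSelfAdjoint (cfc F h) := cfc_predicate F h
  set q : B := cfc (fun t => √t) h with hq
  have hqs : IsSelfAdjoint q := cfc_predicate _ h
  have hqq : q * q = h := by
    rw [hq, ← cfc_mul _ _ h (by fun_prop) (by fun_prop)]
    conv_rhs => rw [← cfc_id' ℝ h hhs]
    refine cfc_congr fun t ht => ?_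
    exact Real.mul_self_sqrt (aux_spec h hh ht)
  have hqD : q * cfc F h = cfc (fun t => √t * F t) h := by
    rw [hq, ← cfc_mul _ _ h (by fun_prop) (by fun_prop)]
  have e1 : p * cfc F h * h * cfc F h * p = star (q * cfc F h * p) * (q * cfc F h * p) := by
    conv_lhs => enter [1,1,2]; rw [← hqq]
    simp only [star_mul, hp.star_eq, hD.star_eq, hqs.star_eq, mul_assoc]
  rw [e1, CStarRing.norm_star_mul_self, ← sq]
  refine (aux_norm (q * cfc F h) p h hp hph).trans ?_
  rw [hqD, (cfc_predicate (fun t => √t * F t) h : IsSelfAdjoint _).star_eq,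
    aux_sandwich h hhs _ (by fun_prop)]
  refine norm_cfc_le (by positivity) fun t ht => ?_
  have ht := aux_spec h hh ht
  have e2 : √t * F t * t * (√t * F t) = (t * F t) ^ 2 := by
    linear_combination (F t * t * F t) * (Real.mul_self_sqrt ht)
  rw [e2, norm_pow]
  gcongr
  have h1 := auxT_est hr ht
  have h2 := auxT_est hs ht
  rw [Real.norm_eq_abs, hF]
  rw [abs_le] at *
  constructor <;> simp only [mul_sub] <;> linarith [h1.1, h1.2, h2.1, h2.2]

lemma aux_cutoff (b g : B) (hb : 0 ≤ b) (hg : 0 ≤ g) (δ ε : ℝ) (hδ : δ < ε)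
    (h : ‖g - b‖ ≤ δ) : ∃ e : B, IsSelfAdjoint e ∧ ‖e‖ ≤ 1 ∧
      cfc (fun t : ℝ => max (t - ε) 0) b ≤ e * g * e := by
  have hbs : IsSelfAdjoint b := .of_nonneg hb
  have hgs : IsSelfAdjoint g := .of_nonneg hg
  set f : ℝ → ℝ := fun t => √(max (t - ε) 0 / max (t - δ) (ε - δ)) with hf
  have hpos : ∀ t, 0 < max (t - δ) (ε - δ) := fun t => lt_max_of_lt_right (by linarith)
  have hfc : Continuous f := by
    refine Real.continuous_sqrt.comp (Continuous.div (by fun_prop) (by fun_prop) ?_)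
    exact fun t => (hpos t).ne'
  have hes : IsSelfAdjoint (cfc f b) := cfc_predicate f b
  refine ⟨cfc f b, hes, ?_, ?_⟩
  · refine norm_cfc_le zero_le_one fun t _ => ?_
    rw [Real.norm_of_nonneg (Real.sqrt_nonneg _), Real.sqrt_le_left zero_le_one, one_pow, div_le_one (hpos t)]
    apply max_le
    · exact le_max_of_le_left (by linarith)
    · exact (hpos t).le
  · have h1 : b - algebraMap ℝ B δ ≤ g := by
      have := (hgs.sub hbs).neg_algebraMap_norm_le_self
      have h2 : algebraMap ℝ B ‖g - b‖ ≤ algebraMap ℝ B δ := algebraMap_mono B h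
      have h3 : - algebraMap ℝ B δ ≤ g - b := (neg_le_neg h2).trans this
      rw [sub_eq_add_neg, add_comm]
      exact le_sub_iff_add_le.1 h3
    refine le_trans (le_of_eq ?_) (hes.conjugate_le_conjugate h1)
    have h2 : b - algebraMap ℝ B δ = cfc (fun t => t - δ) b := by
      rw [cfc_sub (fun t => t) (fun _ => δ) b, cfc_id' ℝ b, cfc_const δ b]
    rw [h2, ← cfc_mul _ _ b (by fun_prop) (by fun_prop),
      ← cfc_mul _ _ b (by fun_prop) (by fun_prop)]
    refine cfc_congr fun t _ => ?_
    have h3 : f t * f t = max (t - ε) 0 / max (t - δ) (ε - δ) :=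
      Real.mul_self_sqrt (div_nonneg (le_max_right _ _) (hpos t).le)
    have h4 : f t * (t - δ) * f t = max (t - ε) 0 / max (t - δ) (ε - δ) * (t - δ) := by
      rw [← h3]; ring
    simp only [h4]
    rcases le_total t ε with hc | hc
    · rw [max_eq_right (by linarith)]; simp
    · rw [max_eq_left (a := t - δ) (by linarith), div_mul_cancel₀]
      linarith

noncomputable def auxL (η t : ℝ) : ℝ := √(max (t - η) 0 / (max t η) ^ 3)

lemma auxL_cont {η : ℝ} (hη : 0 < η) : Continuous (auxL η) := by
  unfold auxL
  refine Real.continuous_sqrt.comp (Continuous.div (by fun_prop) (by fun_prop) ?_)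
  intro t
  have : 0 < max t η := lt_max_of_lt_right hη
  positivity

lemma auxL_sq {η : ℝ} (hη : 0 < η) (t : ℝ) :
    auxL η t * auxL η t = max (t - η) 0 / (max t η) ^ 3 := by
  have : 0 < max t η := lt_max_of_lt_right hη
  have h2 : 0 ≤ max (t - η) 0 := le_max_right _ _
  exact Real.mul_self_sqrt (by positivity)

lemma auxL_g {η : ℝ} (hη : 0 < η) (t : ℝ) :
    auxL η t * auxL η t * t ^ 3 = max (t - η) 0 := by
  rw [auxL_sq hη]
  rcases le_total t η with hc | hc
  · rw [max_eq_right (by linarith)]; simp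
  · rw [max_eq_left (a := t) hc, div_mul_cancel₀]
    have : 0 < t := by linarith
    positivity

lemma auxL_le {η : ℝ} (hη : 0 < η) (t : ℝ) :
    auxL η t * auxL η t ≤ (η ^ 3)⁻¹ * max (t - η) 0 := by
  rw [auxL_sq hη, div_eq_mul_inv, mul_comm]
  have h2 : 0 ≤ max (t - η) 0 := le_max_right _ _
  gcongr
  exact le_max_right _ _

lemma auxL_one {η : ℝ} (hη : 0 < η) {t : ℝ} (ht : 0 ≤ t) : t * auxL η t ≤ 1 := by
  have h0 : 0 ≤ auxL η t := Real.sqrt_nonneg _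
  by_contra! hlt
  have h1 := auxL_g hη t
  have ht' : 0 < t := lt_of_le_of_ne ht (by rintro rfl; simp at hlt; linarith)
  have h2 : max (t - η) 0 ≤ t := max_le (by linarith) ht
  nlinarith [mul_pos ht' (show 0 < (t * auxL η t) * (t * auxL η t) - 1 by nlinarith)]

lemma aux_main (a b : B) (ha : 0 ≤ a) (hb : 0 ≤ b) (ε : ℝ) (h : ‖a - b‖ < ε) :
    ∃ u : B, ‖a * u‖ ≤ 1 ∧
      star (a * u) * a * (a * u) = cfc (fun t : ℝ => max (t - ε) 0) b := by
  have has : IsSelfAdjoint a := .of_nonneg ha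
  obtain ⟨η, hη, hηδ⟩ : ∃ η : ℝ, 0 < η ∧ ‖a - b‖ + η < ε :=
    ⟨(ε - ‖a - b‖) / 2, by linarith, by linarith⟩
  set g : B := cfc (fun t : ℝ => max (t - η) 0) a with hgdef
  have hg : 0 ≤ g := cfc_nonneg fun t _ => le_max_right _ _
  have hga : ‖g - a‖ ≤ η := by
    have : g - a = cfc (fun t : ℝ => max (t - η) 0 - t) a := by
      rw [cfc_sub (fun t : ℝ => max (t - η) 0) (fun t => t) a, cfc_id' ℝ a]
    rw [this]
    refine norm_cfc_le hη.le fun t ht => ?_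
    have ht := aux_spec a ha ht
    rw [Real.norm_eq_abs, abs_le]
    constructor
    · linarith [le_max_left (t - η) 0]
    · linarith [max_le (show t - η ≤ t by linarith) ht]
  have hgb : ‖g - b‖ ≤ ‖a - b‖ + η := by
    have : g - b = (a - b) + (g - a) := by abel
    rw [this]
    exact (norm_add_le _ _).trans (by linarith)
  obtain ⟨e, hes, he1, hce⟩ := aux_cutoff b g hb hg _ ε hηδ hgb
  set c : B := cfc (fun t : ℝ => max (t - ε) 0) b with hc
  set H : B := e * g * e with hH
  have hH0 : 0 ≤ H := hes.conjugate_nonneg hg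
  set p : B := cfc (fun t : ℝ => √(max (t - ε) 0)) b with hpdef
  have hp : IsSelfAdjoint p := cfc_predicate _ b
  have hpp : p * p = c := by
    rw [hpdef, ← cfc_mul _ _ b (by fun_prop) (by fun_prop)]
    exact cfc_congr fun t _ => Real.mul_self_sqrt (le_max_right _ _)
  have hpH : p * p ≤ H := hpp ▸ hce
  have hLc := auxL_cont hη
  set l : B := cfc (auxL η) a with hl
  have hls : IsSelfAdjoint l := cfc_predicate _ a
  have hal : a * l = cfc (fun t => t * auxL η t) a := by
    conv_lhs => enter [1]; rw [← cfc_id' ℝ a has]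
    rw [hl, ← cfc_mul _ _ a (by fun_prop) (by fun_prop)]
  have hal1 : ‖a * l‖ ≤ 1 := by
    rw [hal]
    refine norm_cfc_le zero_le_one fun t ht => ?_
    have ht := aux_spec a ha ht
    rw [Real.norm_of_nonneg (mul_nonneg ht (show 0 ≤ auxL η t from Real.sqrt_nonneg _))]
    exact auxL_one hη ht
  have hals : star (a * l) = a * l := by
    rw [hal]; exact (cfc_predicate (fun t => t * auxL η t) a : IsSelfAdjoint _).star_eq
  have hlg : a * l * a * (a * l) = g := by
    rw [hal, aux_sandwich a has _ (by fun_prop), hgdef]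
    refine cfc_congr fun t _ => ?_
    rw [← auxL_g hη t]; ring
  have hll : l * l ≤ (η ^ 3)⁻¹ • g := by
    rw [hl, hgdef, ← cfc_mul _ _ a (by fun_prop) (by fun_prop),
      ← cfc_smul (η ^ 3)⁻¹ (fun t : ℝ => max (t - η) 0) a (by fun_prop)]
    exact cfc_mono (fun t _ => by simpa using auxL_le hη t) (by fun_prop) (by fun_prop)
  -- the sequence
  set r : ℕ → ℝ := fun n => 1 / ((n : ℝ) + 1) with hr
  have hr0 : ∀ n, 0 < r n := fun n => by positivity
  have hrt : Filter.Tendsto r Filter.atTop (nhds 0) := tendsto_one_div_add_atTop_nhds_zero_nat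
  set T : ℕ → B := fun n => cfc (auxT (r n)) H with hT
  have hTs : ∀ n, IsSelfAdjoint (T n) := fun n => cfc_predicate _ H
  set u : ℕ → B := fun n => l * e * T n * p with hu
  set C : ℝ := √((η ^ 3)⁻¹) with hC
  have hC2 : C ^ 2 = (η ^ 3)⁻¹ := Real.sq_sqrt (by positivity)
  have hdist : ∀ n m, ‖u n - u m‖ ≤ C * (r n + r m) := by
    intro n m
    have h3 := aux_iii p H hp hH0 hpH (hr0 n) (hr0 m)
    change ‖p * (T n - T m) * H * (T n - T m) * p‖ ≤ _ at h3
    have hDs : IsSelfAdjoint (T n - T m) := (hTs n).sub (hTs m)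
    have e1 : u n - u m = l * (e * (T n - T m) * p) := by
      simp only [hu, mul_sub, sub_mul, mul_assoc]
    set z := e * (T n - T m) * p with hz
    have e2 : star z * g * z = p * (T n - T m) * H * (T n - T m) * p := by
      simp only [hz, hH, star_mul, hp.star_eq, hDs.star_eq, hes.star_eq, mul_assoc]
    have e3 : ‖u n - u m‖ ^ 2 ≤ (C * (r n + r m)) ^ 2 := by
      calc ‖u n - u m‖ ^ 2 = ‖star z * (l * l) * z‖ := by
            rw [e1, sq, ← CStarRing.norm_star_mul_self, star_mul, hls.star_eq]
            simp only [mul_assoc]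
        _ ≤ ‖star z * ((η ^ 3)⁻¹ • g) * z‖ := by
            apply CStarAlgebra.norm_le_norm_of_nonneg_of_le
            · apply star_left_conjugate_nonneg
              have := star_mul_self_nonneg l
              rwa [hls.star_eq] at this
            · exact star_left_conjugate_le_conjugate hll z
        _ = (η ^ 3)⁻¹ * ‖star z * g * z‖ := by
            rw [mul_smul_comm, smul_mul_assoc, norm_smul, Real.norm_of_nonneg (by positivity)]
        _ ≤ (η ^ 3)⁻¹ * (r n + r m) ^ 2 := by rw [e2]; gcongr
        _ = _ := by rw [mul_pow, hC2]
    have : 0 ≤ C * (r n + r m) :=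
      mul_nonneg (Real.sqrt_nonneg _) (add_nonneg (hr0 n).le (hr0 m).le)
    exact (sq_le_sq₀ (norm_nonneg _) this).1 e3
  have hcau : CauchySeq u := by
    refine cauchySeq_of_le_tendsto_0 (fun n => C * (r n + r n)) (fun n m N hn hm => ?_) ?_
    · rw [dist_eq_norm]
      refine (hdist n m).trans ?_
      have h1 : r n ≤ r N := one_div_le_one_div_of_le (by positivity) (by gcongr)
      have h2 : r m ≤ r N := one_div_le_one_div_of_le (by positivity) (by gcongr)
      have : 0 ≤ C := Real.sqrt_nonneg _
      gcongr
    · simpa using (hrt.add hrt).const_mul C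
  obtain ⟨v, hv⟩ := cauchySeq_tendsto_of_complete hcau
  have hav : Filter.Tendsto (fun n => a * u n) Filter.atTop (nhds (a * v)) := hv.const_mul a
  refine ⟨v, ?_, ?_⟩
  · refine le_of_tendsto hav.norm (Filter.Eventually.of_forall fun n => ?_)
    have h1 := aux_i p H hp hH0 hpH (hr0 n)
    have e1 : a * u n = (a * l) * (e * (T n * p)) := by simp only [hu, mul_assoc]
    rw [e1]
    calc ‖(a * l) * (e * (T n * p))‖ ≤ ‖a * l‖ * (‖e‖ * ‖T n * p‖) :=
          (norm_mul_le _ _).trans (by gcongr; exact norm_mul_le _ _)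
      _ ≤ 1 * (1 * 1) := by gcongr
      _ = 1 := by norm_num
  · have hlim : Filter.Tendsto (fun n => star (a * u n) * a * (a * u n)) Filter.atTop
        (nhds (star (a * v) * a * (a * v))) := (hav.star.mul_const a).mul hav
    refine tendsto_nhds_unique hlim ?_
    rw [tendsto_iff_norm_sub_tendsto_zero]
    refine squeeze_zero (fun n => norm_nonneg _) (fun n => ?_)
      (show Filter.Tendsto (fun n => r n ^ 2) Filter.atTop (nhds 0) by simpa using hrt.pow 2)
    have h2 := aux_ii p H hp hH0 hpH (hr0 n)
    change ‖p * T n * H * T n * p - p * p‖ ≤ _ at h2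
    have e1 : star (a * u n) * a * (a * u n) = p * T n * H * T n * p := by
      have e2 : a * u n = (a * l) * (e * T n * p) := by simp only [hu, mul_assoc]
      have e3 : star (a * u n) * a * (a * u n)
          = star (e * T n * p) * (a * l * a * (a * l)) * (e * T n * p) := by
        rw [e2, star_mul, hals]; simp only [mul_assoc]
      rw [e3, hlg]
      simp only [hH, star_mul, hp.star_eq, (hTs n).star_eq, hes.star_eq, mul_assoc]
    rw [e1, ← hpp]
    exact h2

end aux

/-- If `a b ∈ A₊` and `‖a - b‖ < ε`, then there is a contraction `d` with
`d* a d = (b - ε)₊`, the `ε`-cut-down of `b` given by functional calculus. -/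
theorem stmt0 {A : Type*} [NonUnitalCStarAlgebra A] [PartialOrder A] [StarOrderedRing A]
    (a b : A) (ha : 0 ≤ a) (hb : 0 ≤ b) (ε : ℝ) (hε : 0 < ε) (h : ‖a - b‖ < ε) :
    ∃ d : A, ‖d‖ ≤ 1 ∧ star d * a * d = cfcₙ (fun t : ℝ => max (t - ε) 0) b := by
  have h' : ‖(a : Unitization ℂ A) - (b : Unitization ℂ A)‖ < ε := by
    rw [← Unitization.inr_sub, Unitization.norm_inr]
    exact h
  obtain ⟨u, hu1, hu2⟩ := aux_main (a : Unitization ℂ A) (b : Unitization ℂ A)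
    (Unitization.inr_nonneg_iff.2 ha) (Unitization.inr_nonneg_iff.2 hb) ε h'
  have hd : (a : Unitization ℂ A) * u
      = (((a : Unitization ℂ A) * u).snd : Unitization ℂ A) := by
    ext <;> simp
  refine ⟨((a : Unitization ℂ A) * u).snd, ?_, ?_⟩
  · rwa [hd, Unitization.norm_inr] at hu1
  · rw [hd, ← Unitization.real_cfcₙ_eq_cfc_inr b _ (by simp [hε.le]), ← Unitization.inr_star,
      ← Unitization.inr_mul, ← Unitization.inr_mul] at hu2
    exact Unitization.inr_injective hu2
end

section
/- Let A be a C*-algebra of real rank zero carrying an action σ of a discrete group G with the property that for all projections p, q ∈ A with p ≠ 0, every r ∈ A and every ε > 0 there exist e₁, e₂ ∈ A and g₁, g₂ ∈ G with ‖e₁* p e₁ − σ_{g₁}(p)‖ < ε, ‖e₂* q e₂ − σ_{g₂}(q)‖ < ε and ‖e₁* r e₂‖ < ε. Then σ is G-separating: for all a₁, a₂ ∈ A₊, c ∈ A and ε > 0 there exist d₁, d₂ ∈ A and g₁, g₂ ∈ G with ‖dⱼ* aⱼ dⱼ − σ_{gⱼ}(aⱼ)‖ < ε (j = 1,2) and ‖d₁*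 c d₂‖ < ε. -/
theorem aux_tri {A : Type*} [NonUnitalCStarAlgebra A] (s c : A) (μ M : ℝ)
    (h : ‖s - c‖ ≤ μ) (hs : ‖s‖ ≤ M) (hc : ‖c‖ ≤ M) :
    ‖s * s - c * c‖ ≤ 2 * M * μ := by
  have e : s * s - c * c = s * (s - c) + (s - c) * c := by noncomm_ring
  rw [e]
  have hM := (norm_nonneg s).trans hs
  calc _ ≤ ‖s * (s - c)‖ + ‖(s - c) * c‖ := norm_add_le _ _
    _ ≤ ‖s‖ * ‖s - c‖ + ‖s - c‖ * ‖c‖ := add_le_add (norm_mul_le _ _) (norm_mul_le _ _)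
    _ ≤ M * μ + μ * M := by gcongr; exact (norm_nonneg _).trans h
    _ = _ := by ring

theorem aux_conj {A : Type*} [NonUnitalCStarAlgebra A] (y x w : A) (K L δ : ℝ)
    (hy : ‖y‖ ≤ K) (hw : ‖w‖ ≤ L) (hx : ‖x‖ ≤ δ) :
    ‖star y * x * w‖ ≤ K * δ * L := by
  have hK := (norm_nonneg y).trans hy
  have hd := (norm_nonneg x).trans hx
  calc _ ≤ ‖star y‖ * ‖x‖ * ‖w‖ := (norm_mul_le _ _).trans (by gcongr; exact norm_mul_le _ _)
    _ ≤ _ := by rw [norm_star]; gcongr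

theorem aux_proj {A : Type*} [NonUnitalCStarAlgebra A] (p : A) (h1 : IsSelfAdjoint p)
    (h2 : IsIdempotentElem p) : ‖p‖ ≤ 1 := by
  have h : ‖p‖ * ‖p‖ = ‖p‖ := by
    have := CStarRing.norm_star_mul_self (x := p)
    rw [h1.star_eq, h2.eq] at this
    exact this.symm
  nlinarith [norm_nonneg p]

theorem aux_main_s19 {A : Type*} [NonUnitalCStarAlgebra A] [PartialOrder A] [StarOrderedRing A]
    (hRRZ : ∀ a : A, IsSelfAdjoint a → ∀ δ : ℝ, 0 < δ →
      ∃ b : A, IsSelfAdjoint b ∧ (quasispectrum ℝ b).Finite ∧ ‖a - b‖ < δ)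
    (a : A) (ha : 0 ≤ a) : ∃ K : ℝ, 1 ≤ K ∧ ∀ δ : ℝ, 0 < δ → ∃ p z y : A,
      IsSelfAdjoint p ∧ IsIdempotentElem p ∧ z * p = z ∧ ‖y‖ ≤ K ∧
      ‖star z * a * z - p‖ ≤ δ ∧ ‖star y * p * y - a‖ ≤ δ := by
  set s := CFC.sqrt a with hs
  have hss : s * s = a := CFC.sqrt_mul_sqrt_self a
  have hs0 : IsSelfAdjoint s := (CFC.sqrt_nonneg a).isSelfAdjoint
  refine ⟨‖s‖ + 1, by linarith [norm_nonneg s], fun δ hδ => ?_⟩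
  set M := ‖s‖ + 1 with hM
  have hM1 : 1 ≤ M := by linarith [norm_nonneg s]
  obtain ⟨η, hη0, hη1, hη⟩ : ∃ η : ℝ, 0 < η ∧ η ≤ 1 ∧ η ^ 2 ≤ δ / 2 := by
    refine ⟨min 1 (δ / 2), by positivity, min_le_left _ _, ?_⟩
    have h1 := min_le_left 1 (δ / 2)
    have h2 := min_le_right 1 (δ / 2)
    have h3 : 0 < min 1 (δ / 2) := by positivity
    nlinarith
  set μ := min 1 (η ^ 2 * δ / (4 * M)) with hμ
  have hμ0 : 0 < μ := by positivity
  have hμ1 : μ ≤ 1 := min_le_left _ _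
  have hμ2 : 2 * M * μ ≤ η ^ 2 * δ / 2 := by
    calc 2 * M * μ ≤ 2 * M * (η ^ 2 * δ / (4 * M)) := by gcongr; exact min_le_right _ _
      _ = _ := by field_simp; norm_num
  obtain ⟨c, hc, hfin, hsc⟩ := hRRZ s hs0 μ hμ0
  have hcM : ‖c‖ ≤ M := by
    have : ‖c‖ ≤ ‖s‖ + ‖s - c‖ := by
      have := norm_sub_le s (s - c); rwa [sub_sub_cancel] at this
    linarith
  have hac : ‖a - c * c‖ ≤ η ^ 2 * δ / 2 := by
    rw [← hss]
    exact (aux_tri s c μ M hsc.le (by linarith) hcM).trans hμ2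
  have hcont : ∀ f : ℝ → ℝ, ContinuousOn f (quasispectrum ℝ c) := fun f => hfin.continuousOn f
  set P : ℝ → ℝ := fun t => if η ≤ |t| then 1 else 0 with hP
  set Z : ℝ → ℝ := fun t => if η ≤ |t| then t⁻¹ else 0 with hZ
  set Y : ℝ → ℝ := fun t => if η ≤ |t| then t else 0 with hY
  have hP0 : P 0 = 0 := by simp [hP, hη0]
  have hZ0 : Z 0 = 0 := by simp [hZ]
  have hY0 : Y 0 = 0 := by simp [hY]
  have hmul : ∀ f g : ℝ → ℝ, f 0 = 0 → g 0 = 0 →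
      cfcₙ f c * cfcₙ g c = cfcₙ (fun t => f t * g t) c := fun f g hf hg =>
    (cfcₙ_mul f g c (hcont f) hf (hcont g) hg).symm
  have hsa : ∀ f : ℝ → ℝ, IsSelfAdjoint (cfcₙ f c) := fun f => cfcₙ_predicate f c
  have hid : cfcₙ (fun t : ℝ => t) c = c := cfcₙ_id' ℝ c
  have hne : ∀ t : ℝ, η ≤ |t| → t ≠ 0 := fun t h h0 => by simp [h0] at h; linarith
  have hcc : c * c = cfcₙ (fun t : ℝ => t * t) c := by
    rw [← hmul _ _ rfl rfl, hid]
  have hz : ‖cfcₙ Z c‖ ≤ η⁻¹ := by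
    refine norm_cfcₙ_le (fun t _ => ?_)
    simp only [hZ]
    split_ifs with h
    · rw [norm_inv, Real.norm_eq_abs]; gcongr
    · simp; positivity
  have hyM : ‖cfcₙ Y c‖ ≤ M := by
    refine norm_cfcₙ_le (fun t ht => ?_)
    have h1 : ‖t‖ ≤ ‖c‖ := by
      have := norm_apply_le_norm_cfcₙ (fun t : ℝ => t) c ht (hcont _) rfl hc
      rwa [hid] at this
    simp only [hY]
    split_ifs
    · linarith
    · simp; linarith
  refine ⟨cfcₙ P c, cfcₙ Z c, cfcₙ Y c, hsa P, ?_, ?_, hyM, ?_, ?_⟩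
  · rw [IsIdempotentElem, hmul P P hP0 hP0]
    congr 1; ext t; simp [hP]
  · rw [hmul _ _ hZ0 hP0]
    congr 1; ext t; simp only [hP, hZ]; split_ifs <;> simp
  · have h1 : star (cfcₙ Z c) * (c * c) * cfcₙ Z c = cfcₙ P c := by
      rw [(hsa Z).star_eq, hcc, hmul _ _ hZ0 (by simp), hmul _ _ (by simp) hZ0]
      congr 1; ext t; simp only [hP, hZ]
      split_ifs with h
      · have := hne t h
        field_simp
      · simp
    have h2 : star (cfcₙ Z c) * a * cfcₙ Z c - cfcₙ P c
        = star (cfcₙ Z c) * (a - c * c) * cfcₙ Z c := by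
      rw [mul_sub, sub_mul, h1]
    rw [h2]
    refine (aux_conj _ _ _ _ _ _ hz hz hac).trans ?_
    field_simp; norm_num
  · have h1 : star (cfcₙ Y c) * cfcₙ P c * cfcₙ Y c = cfcₙ (fun t => Y t * P t * Y t) c := by
      rw [(hsa Y).star_eq, hmul _ _ hY0 hP0, hmul _ _ (by simp [hY0]) hY0]
    have h2 : ‖star (cfcₙ Y c) * cfcₙ P c * cfcₙ Y c - c * c‖ ≤ η ^ 2 := by
      rw [h1, hcc, ← cfcₙ_sub _ _ c (hcont _) (by simp [hY0]) (hcont _) (by simp)]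
      refine norm_cfcₙ_le (fun t _ => ?_)
      simp only [hP, hY]
      split_ifs with h
      · simp; positivity
      · push Not at h
        simp only [mul_zero, zero_sub, norm_neg, Real.norm_eq_abs, abs_mul]
        nlinarith [abs_nonneg t]
    have h3 : ‖c * c - a‖ ≤ δ / 2 := by
      rw [norm_sub_rev]
      refine hac.trans ?_
      have : η ^ 2 ≤ 1 := by nlinarith
      nlinarith
    have := norm_sub_le_norm_sub_add_norm_sub (star (cfcₙ Y c) * cfcₙ P c * cfcₙ Y c) (c * c) a
    linarith

theorem aux_est {A : Type*} [NonUnitalCStarAlgebra A] (τ : A ≃⋆ₐ[ℂ] A) (a p z y e : A)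
    (K δ κ : ℝ) (hK : 1 ≤ K) (hκ : κ ≤ 1) (hp : IsSelfAdjoint p) (hp2 : IsIdempotentElem p)
    (hzp : z * p = z) (hy : ‖y‖ ≤ K) (hz : ‖star z * a * z - p‖ ≤ δ)
    (hya : ‖star y * p * y - a‖ ≤ δ) (he : ‖star e * p * e - τ p‖ ≤ κ) :
    ‖star (z * e * τ y) * a * (z * e * τ y) - τ a‖ ≤ 2 * K ^ 2 * δ + K ^ 2 * κ + δ := by
  have hn : ∀ x, ‖τ x‖ = ‖x‖ := fun x => NonUnitalStarAlgHom.norm_map τ (EquivLike.injective τ) x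
  have hδ : 0 ≤ δ := (norm_nonneg _).trans hz
  have hpe : ‖p * e‖ * ‖p * e‖ ≤ 2 := by
    have h1 := CStarRing.norm_star_mul_self (x := p * e)
    have h2 : star (p * e) * (p * e) = star e * p * e := by
      rw [star_mul, hp.star_eq, mul_assoc, ← mul_assoc p p, hp2.eq, mul_assoc]
    rw [← h1, h2]
    have h3 := norm_le_norm_sub_add (star e * p * e) (τ p)
    have h4 := aux_proj p hp hp2
    rw [hn] at h3
    linarith
  have hps : star p = p := hp.star_eq
  have hzp' : p * star z = star z := by
    have := congrArg star hzp
    rwa [star_mul, hps] at this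
  have key : star (z * e * τ y) * a * (z * e * τ y) - τ a
      = star (τ y) * (star (p * e) * (star z * a * z - p) * (p * e)) * τ y
        + star (τ y) * (star e * p * e - τ p) * τ y + τ (star y * p * y - a) := by
    have h1 : star (p * e) * (star z * a * z - p) * (p * e)
        = star e * (star z * a * z) * e - star e * p * e := by
      have h2 : star (p * e) * (star z * a * z - p) * (p * e)
        = star e * ((p * star z) * a * (z * p)) * e - star e * (p * p * p) * e := by
        rw [star_mul, hps]; noncomm_ring
      rw [h2, hzp, hzp', hp2.eq, hp2.eq]
    rw [h1, map_sub, map_mul, map_mul, map_star, star_mul, star_mul]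
    noncomm_ring
  rw [key]
  have hy' : ‖τ y‖ ≤ K := by rwa [hn]
  have b1 : ‖star (p * e) * (star z * a * z - p) * (p * e)‖ ≤ 2 * δ := by
    refine (aux_conj _ _ _ _ _ _ le_rfl le_rfl hz).trans ?_
    nlinarith
  have b2 := aux_conj _ _ _ _ _ _ hy' hy' b1
  have b3 := aux_conj _ _ _ _ _ _ hy' hy' he
  refine (norm_add₃_le).trans ?_
  rw [hn]
  nlinarith


/-- If `A` is a C*-algebra of real rank zero (here: self-adjoint elements with
finite quasispectrum are dense in the self-adjoint part) and the `G`-separation inequalities can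
be solved for all projections `p ≠ 0`, `q` of `A`, then the action is `G`-separating. -/
theorem stmt19 {A G : Type*} [NonUnitalCStarAlgebra A] [PartialOrder A] [StarOrderedRing A]
    [Group G]
    (σ : G → A ≃⋆ₐ[ℂ] A) (hσ : ∀ g h x, σ (g * h) x = σ g (σ h x))
    (hRRZ : ∀ a : A, IsSelfAdjoint a → ∀ δ : ℝ, 0 < δ →
      ∃ b : A, IsSelfAdjoint b ∧ (quasispectrum ℝ b).Finite ∧ ‖a - b‖ < δ)
    (hproj : ∀ p q : A, IsSelfAdjoint p → IsIdempotentElem p → p ≠ 0 →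
      IsSelfAdjoint q → IsIdempotentElem q → ∀ r : A, ∀ ε : ℝ, 0 < ε →
        ∃ (e₁ e₂ : A) (g₁ g₂ : G),
          ‖star e₁ * p * e₁ - σ g₁ p‖ < ε ∧ ‖star e₂ * q * e₂ - σ g₂ q‖ < ε ∧
          ‖star e₁ * r * e₂‖ < ε) :
    ∀ a₁ a₂ : A, 0 ≤ a₁ → 0 ≤ a₂ → ∀ c : A, ∀ ε : ℝ, 0 < ε →
      ∃ (d₁ d₂ : A) (g₁ g₂ : G),
        ‖star d₁ * a₁ * d₁ - σ g₁ a₁‖ < ε ∧ ‖star d₂ * a₂ * d₂ - σ g₂ a₂‖ < ε ∧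
        ‖star d₁ * c * d₂‖ < ε := by
  intro a₁ a₂ ha₁ ha₂ c ε hε
  obtain ⟨K₁, hK₁, H₁⟩ := aux_main_s19 hRRZ a₁ ha₁
  obtain ⟨K₂, hK₂, H₂⟩ := aux_main_s19 hRRZ a₂ ha₂
  set K := max K₁ K₂ with hKdef
  have hK : 1 ≤ K := hK₁.trans (le_max_left _ _)
  set δ := ε / (8 * K ^ 2) with hδ
  have hδ0 : 0 < δ := by positivity
  have hδ1 : K ^ 2 * δ = ε / 8 := by rw [hδ]; field_simp
  have hδ2 : δ ≤ ε / 8 := by rw [← hδ1]; exact le_mul_of_one_le_left hδ0.le (one_le_pow₀ hK)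
  obtain ⟨p₁, z₁, y₁, hp₁, hpi₁, hzp₁, hy₁, hz₁, hya₁⟩ := H₁ δ hδ0
  obtain ⟨p₂, z₂, y₂, hp₂, hpi₂, hzp₂, hy₂, hz₂, hya₂⟩ := H₂ δ hδ0
  have hy₁' : ‖y₁‖ ≤ K := hy₁.trans (le_max_left _ _)
  have hy₂' : ‖y₂‖ ≤ K := hy₂.trans (le_max_right _ _)
  have hn : ∀ g x, ‖σ g x‖ = ‖x‖ := fun g x => NonUnitalStarAlgHom.norm_map (σ g) (EquivLike.injective (σ g)) x
  by_cases h0 : p₁ = 0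
  · have h1 : ∀ x, σ 1 x = x := fun x => by
      apply EquivLike.injective (σ 1)
      rw [← hσ, one_mul]
    refine ⟨0, z₂ * y₂, 1, 1, ?_, ?_, by simpa using hε⟩
    · rw [h0] at hya₁
      simp only [star_zero, zero_mul, mul_zero, zero_sub, norm_neg] at hya₁ ⊢
      rw [hn]; linarith
    · rw [h1]
      have key : star (z₂ * y₂) * a₂ * (z₂ * y₂) - a₂
          = star y₂ * (star z₂ * a₂ * z₂ - p₂) * y₂ + (star y₂ * p₂ * y₂ - a₂) := by
        rw [star_mul]; noncomm_ring
      rw [key]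
      have b := aux_conj _ _ _ _ _ _ hy₂' hy₂' hz₂
      refine (norm_add_le _ _).trans_lt ?_
      nlinarith
  · set κ := min 1 (ε / (4 * K ^ 2)) with hκ
    have hκ0 : 0 < κ := by positivity
    have hκ1 : K ^ 2 * κ ≤ ε / 4 := by
      calc K ^ 2 * κ ≤ K ^ 2 * (ε / (4 * K ^ 2)) := by gcongr; exact min_le_right _ _
        _ = _ := by field_simp
    obtain ⟨e₁, e₂, g₁, g₂, he₁, he₂, her⟩ :=
      hproj p₁ p₂ hp₁ hpi₁ h0 hp₂ hpi₂ (star z₁ * c * z₂) κ hκ0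
    refine ⟨z₁ * e₁ * σ g₁ y₁, z₂ * e₂ * σ g₂ y₂, g₁, g₂, ?_, ?_, ?_⟩
    · refine (aux_est (σ g₁) a₁ p₁ z₁ y₁ e₁ K δ κ hK (min_le_left _ _) hp₁ hpi₁ hzp₁ hy₁' hz₁
        hya₁ he₁.le).trans_lt ?_
      linarith
    · refine (aux_est (σ g₂) a₂ p₂ z₂ y₂ e₂ K δ κ hK (min_le_left _ _) hp₂ hpi₂ hzp₂ hy₂' hz₂
        hya₂ he₂.le).trans_lt ?_
      linarith
    · have key : star (z₁ * e₁ * σ g₁ y₁) * c * (z₂ * e₂ * σ g₂ y₂)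
          = star (σ g₁ y₁) * (star e₁ * (star z₁ * c * z₂) * e₂) * σ g₂ y₂ := by
        rw [star_mul, star_mul]; noncomm_ring
      rw [key]
      have b := aux_conj (σ g₁ y₁) _ (σ g₂ y₂) K K κ (by rwa [hn]) (by rwa [hn]) her.le
      nlinarith
end
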